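/- arXiv:1510.06060 — 2 statements merged into one kernel-verified Lean document; each statement's English description precedes it below -/
import Mathlib

section
/- Let Γ be a tree and suppose every fully supported elementary staircase diagram over Γ_n whose distinguished leaf s_n lies in a maximal block is a chain. Then a diagram D lies in both Z⁺(n) (s_n in a maximal block) and Z⁻(n) (s_n in a minimal block) if and only if every block of D contains s_n. -/
/-- A staircase diagram over a graph `G`: a poset of nonempty connected blocks of
vertices satisfying the four axioms of Richmond–Slofstra. -/
structure StaircaseDiagram {V : Type*} (G : SimpleGraph V) where
  blocks : Set (Set V)
  le : Set V → Set V → Prop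
  le_refl : ∀ B ∈ blocks, le B B
  le_trans : ∀ A ∈ blocks, ∀ B ∈ blocks, ∀ C ∈ blocks, le A B → le B C → le A C
  le_antisymm : ∀ A ∈ blocks, ∀ B ∈ blocks, le A B → le B A → A = B
  nonempty : ∀ B ∈ blocks, B.Nonempty
  conn : ∀ B ∈ blocks, (G.induce B).Connected
  /-- (1) if `B` covers `B'` then `B ∪ B'` is connected -/
  cover_conn : ∀ B ∈ blocks, ∀ B' ∈ blocks,
    (le B' B ∧ B' ≠ B ∧ ¬ ∃ C ∈ blocks, (le B' C ∧ B' ≠ C) ∧ (le C B ∧ C ≠ B)) →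
    (G.induce (B ∪ B')).Connected
  /-- (2) each `D_s` is a chain -/
  chain_vertex : ∀ s : V, ∀ B ∈ blocks, ∀ B' ∈ blocks, s ∈ B → s ∈ B' →
    le B B' ∨ le B' B
  /-- (3a) for adjacent `s, t`, `D_s ∪ D_t` is a chain -/
  chain_adj : ∀ s t : V, G.Adj s t → ∀ B ∈ blocks, ∀ B' ∈ blocks,
    (s ∈ B ∨ t ∈ B) → (s ∈ B' ∨ t ∈ B') → le B B' ∨ le B' B
  /-- (3b) `D_s` is a saturated subchain of `D_s ∪ D_t` -/
  saturated_adj : ∀ s t : V, G.Adj s t → ∀ A ∈ blocks, ∀ B ∈ blocks, ∀ C ∈ blocks,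
    s ∈ A → s ∈ B → (s ∈ C ∨ t ∈ C) →
    le A C → A ≠ C → le C B → C ≠ B → s ∈ C
  /-- (4) every block is the minimum of some `D_s` ... -/
  min_exists : ∀ B ∈ blocks, ∃ s ∈ B, ∀ B' ∈ blocks, s ∈ B' → le B B'
  /-- (4) ... and the maximum of some `D_{s'}` -/
  max_exists : ∀ B ∈ blocks, ∃ s ∈ B, ∀ B' ∈ blocks, s ∈ B' → le B' B

namespace StaircaseDiagram

variable {V : Type*} {G : SimpleGraph V} (D : StaircaseDiagram G)

/-- The support of a staircase diagram. -/
def support : Set V := ⋃ B ∈ D.blocks, B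

/-- A staircase diagram is fully supported if every vertex lies in some block. -/
def FullySupported : Prop := D.support = Set.univ

/-- `s` is a critical point if exactly one block contains `s`. -/
def IsCritical (s : V) : Prop :=
  (∃ B ∈ D.blocks, s ∈ B) ∧ {B ∈ D.blocks | s ∈ B}.Subsingleton

/-- `s` is a leaf of the support: it lies in the support and has at most one
neighbour in the support. -/
def IsSupportLeaf (s : V) : Prop :=
  s ∈ D.support ∧ {t | t ∈ D.support ∧ G.Adj s t}.Subsingleton

/-- A staircase diagram is elementary if all its critical points are leaves of
its support. -/
def Elementary : Prop := ∀ s : V, D.IsCritical s → D.IsSupportLeaf s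

/-- A staircase diagram is a chain if any two blocks are comparable. -/
def IsChainDiagram : Prop :=
  ∀ B ∈ D.blocks, ∀ B' ∈ D.blocks, D.le B B' ∨ D.le B' B

end StaircaseDiagram

/-- `s` is contained in a maximal block of `D`. -/
def StaircaseDiagram.InZplus {V : Type*} {G : SimpleGraph V}
    (D : StaircaseDiagram G) (s : V) : Prop :=
  ∃ B ∈ D.blocks, s ∈ B ∧ ∀ B' ∈ D.blocks, D.le B B' → B' = B

/-- `s` is contained in a minimal block of `D`. -/
def StaircaseDiagram.InZminus {V : Type*} {G : SimpleGraph V}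
    (D : StaircaseDiagram G) (s : V) : Prop :=
  ∃ B ∈ D.blocks, s ∈ B ∧ ∀ B' ∈ D.blocks, D.le B' B → B' = B

namespace SimpleGraph

variable {V : Type*} {G : SimpleGraph V} {s : V}

/-- `y` is a child of `x` in the graph `G` rooted at `s`. -/
def IsChild (G : SimpleGraph V) (s x y : V) : Prop :=
  G.Adj x y ∧ G.dist s y = G.dist s x + 1

/-- `x` is an ancestor of `y` (or equal to it) in the graph `G` rooted at `s`. -/
def IsAncestor (G : SimpleGraph V) (s x y : V) : Prop :=
  Relation.ReflTransGen (G.IsChild s) x y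

lemma IsTree.isChild_or_isChild (hG : G.IsTree) {x y : V} (h : G.Adj x y) :
    G.IsChild s x y ∨ G.IsChild s y x := by
  rcases hG.dist_eq_dist_add_one_of_adj s h with h1 | h1
  · exact Or.inr ⟨h.symm, h1⟩
  · exact Or.inl ⟨h, h1⟩

lemma IsTree.isChild_left_unique (hG : G.IsTree) {p q x : V} (hp : G.IsChild s p x)
    (hq : G.IsChild s q x) : p = q := by
  obtain ⟨w, hw⟩ := hG.connected.exists_walk_length_eq_dist s p
  obtain ⟨w', hw'⟩ := hG.connected.exists_walk_length_eq_dist s q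
  have h1 : (w.concat hp.1).IsPath := Walk.isPath_of_length_eq_dist _ (by
    rw [Walk.length_concat, hw, hp.2])
  have h2 : (w'.concat hq.1).IsPath := Walk.isPath_of_length_eq_dist _ (by
    rw [Walk.length_concat, hw', hq.2])
  have h3 := congrArg Subtype.val ((hG.isAcyclic.subsingleton_path s x).elim ⟨_, h1⟩ ⟨_, h2⟩)
  have h4 := congrArg Walk.penultimate h3
  simpa using h4

lemma IsAncestor.dist_le {x y : V} (h : G.IsAncestor s x y) : G.dist s x ≤ G.dist s y := by
  induction h with
  | refl => exact le_rfl
  | tail _ h ih => have := h.2; omega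

lemma IsAncestor.antisymm {x y : V} (h : G.IsAncestor s x y) (h' : G.IsAncestor s y x) :
    x = y := by
  cases h using Relation.ReflTransGen.head_induction_on with
  | refl => rfl
  | head h1 h2 =>
    have h3 : G.dist s _ ≤ G.dist s y := IsAncestor.dist_le h2
    have := h'.dist_le
    have := h1.2
    omega

lemma IsTree.isAncestor_of_isChild_of_ne (hG : G.IsTree) {p x y : V} (hp : G.IsChild s p x)
    (h : G.IsAncestor s y x) (hne : y ≠ x) : G.IsAncestor s y p := by
  rcases Relation.ReflTransGen.cases_tail h with h | ⟨q, h1, h2⟩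
  · exact absurd h.symm hne
  · rwa [hG.isChild_left_unique hp h2]

lemma IsTree.isAncestor_total (hG : G.IsTree) {x y z : V} (hx : G.IsAncestor s x z)
    (hy : G.IsAncestor s y z) : G.IsAncestor s x y ∨ G.IsAncestor s y x := by
  induction hx with
  | refl => exact Or.inr hy
  | @tail b c _ h ih =>
    by_cases hc : y = c
    · subst hc
      exact Or.inl (Relation.ReflTransGen.tail ‹_› h)
    · exact ih (hG.isAncestor_of_isChild_of_ne h hy hc)

lemma IsTree.mem_of_isAncestor (hG : G.IsTree) {B : Set V} (hB : (G.induce B).Connected)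
    (hs : s ∈ B) {x y : V} (hy : y ∈ B) (h : G.IsAncestor s x y) : x ∈ B := by
  have key : ∀ v : B, (G.induce B).Reachable ⟨s, hs⟩ v →
      ∀ z, G.IsAncestor s z v → z ∈ B := by
    intro v hv
    rw [reachable_iff_reflTransGen] at hv
    induction hv with
    | refl =>
      intro z hz
      have h0 := hz.dist_le
      simp only [dist_self, nonpos_iff_eq_zero] at h0
      rwa [← (hG.connected.dist_eq_zero_iff).1 h0]
    | @tail b c _ hbc ih =>
      intro z hz
      have hadj : G.Adj b.1 c.1 := hbc
      rcases hG.isChild_or_isChild (s := s) hadj with h1 | h1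
      · by_cases hzc : z = c.1
        · rw [hzc]; exact c.2
        · exact ih z (hG.isAncestor_of_isChild_of_ne h1 hz hzc)
      · exact ih z (Relation.ReflTransGen.tail hz h1)
  exact key ⟨y, hy⟩ (hB.preconnected _ _) x h

lemma IsTree.exists_isChild_of_ne (hG : G.IsTree) {x : V} (hx : x ≠ s) :
    ∃ p, G.IsChild s p x := by
  obtain ⟨w, hw⟩ := hG.connected.exists_walk_length_eq_dist s x
  have hn : ¬ w.Nil := Walk.not_nil_of_ne hx.symm
  refine ⟨w.penultimate, w.adj_penultimate hn, ?_⟩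
  have h1 : G.dist s w.penultimate ≤ w.dropLast.length := dist_le _
  have h2 : w.dropLast.length + 1 = w.length := by
    have := congrArg Walk.length (w.concat_dropLast (w.adj_penultimate hn))
    rwa [Walk.length_concat] at this
  rcases hG.dist_eq_dist_add_one_of_adj s (w.adj_penultimate hn) with h3 | h3 <;> omega

lemma IsTree.isAncestor_root (hG : G.IsTree) (x : V) : G.IsAncestor s s x := by
  induction hn : G.dist s x generalizing x with
  | zero =>
    rw [(hG.connected.dist_eq_zero_iff).1 hn]
    exact Relation.ReflTransGen.refl
  | succ n ih =>
    obtain ⟨p, hp⟩ := hG.exists_isChild_of_ne (s := s) (x := x) (by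
      rintro rfl
      simp at hn)
    exact Relation.ReflTransGen.tail (ih p (by have := hp.2; omega)) hp

end SimpleGraph

namespace StaircaseDiagram

open SimpleGraph

variable {V : Type*} {G : SimpleGraph V} {s : V}

/-- The star at `x` in a rooted tree: `x` together with its children outside `E`. -/
def star (G : SimpleGraph V) (s : V) (E : Set V) (x : V) : Set V :=
  {v | v = x ∨ (G.IsChild s x v ∧ v ∉ E)}

/-- The centers of the stars that form a diagram: vertices with children and elements of `E`. -/
def starCenters (G : SimpleGraph V) (s : V) (E : Set V) : Set V :=
  {x | x ∈ E ∨ ∃ y, G.IsChild s x y}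

lemma star_injective (E : Set V) : Function.Injective (star G s E) := by
  intro x y h
  have h1 : x ∈ star G s E y := h ▸ Or.inl rfl
  have h2 : y ∈ star G s E x := h ▸ Or.inl rfl
  rcases h1 with h1 | h1
  · exact h1
  rcases h2 with h2 | h2
  · exact h2.symm
  have := h1.1.2
  have := h2.1.2
  omega

/-- Descendants are smaller: `B ≤ B'` if the center of `B'` is an ancestor of that of `B`. -/
def starLE (G : SimpleGraph V) (s : V) (E : Set V) (B B' : Set V) : Prop :=
  ∃ x y, B = star G s E x ∧ B' = star G s E y ∧ G.IsAncestor s y x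

lemma starLE_star_iff {E : Set V} {x y : V} :
    starLE G s E (star G s E x) (star G s E y) ↔ G.IsAncestor s y x := by
  constructor
  · rintro ⟨a, b, ha, hb, h⟩
    rwa [star_injective E ha, star_injective E hb]
  · exact fun h => ⟨x, y, rfl, rfl, h⟩

lemma star_connected (E : Set V) (x : V) : (G.induce (star G s E x)).Connected := by
  rw [connected_iff_exists_forall_reachable]
  refine ⟨⟨x, Or.inl rfl⟩, ?_⟩
  rintro ⟨v, rfl | hv⟩
  · exact Reachable.refl _
  · exact Adj.reachable (G := G.induce (star G s E x)) hv.1.1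

lemma star_union_connected (E : Set V) {x y : V} (h : G.IsChild s y x) :
    (G.induce (star G s E y ∪ star G s E x)).Connected := by
  rw [connected_iff_exists_forall_reachable]
  have hxm : x ∈ star G s E y ∪ star G s E x := Or.inr (Or.inl rfl)
  refine ⟨⟨y, Or.inl (Or.inl rfl)⟩, ?_⟩
  have hx : (G.induce (star G s E y ∪ star G s E x)).Reachable
      ⟨y, Or.inl (Or.inl rfl)⟩ ⟨x, hxm⟩ :=
    Adj.reachable (G := G.induce (star G s E y ∪ star G s E x)) h.1
  rintro ⟨v, (rfl | hv) | (rfl | hv)⟩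
  · exact Reachable.refl _
  · exact Adj.reachable (G := G.induce (star G s E y ∪ star G s E x)) hv.1.1
  · exact hx
  · exact hx.trans (Adj.reachable (G := G.induce (star G s E y ∪ star G s E x)) hv.1.1)

lemma eq_or_eq_or_isChild_of_mem_star (hG : G.IsTree) {E : Set V} {u v x : V}
    (h : G.IsChild s u v) (hx : u ∈ star G s E x ∨ v ∈ star G s E x) :
    x = v ∨ x = u ∨ G.IsChild s x u := by
  rcases hx with (hx | hx) | (hx | hx)
  · exact Or.inr (Or.inl hx.symm)
  · exact Or.inr (Or.inr hx.1)
  · exact Or.inl hx.symm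
  · exact Or.inr (Or.inl (hG.isChild_left_unique hx.1 h))

lemma isAncestor_total_of_mem_star (hG : G.IsTree) {E : Set V} {u v x y : V}
    (h : G.IsChild s u v) (hx : u ∈ star G s E x ∨ v ∈ star G s E x)
    (hy : u ∈ star G s E y ∨ v ∈ star G s E y) : G.IsAncestor s y x ∨ G.IsAncestor s x y := by
  have key : ∀ z, z = v ∨ z = u ∨ G.IsChild s z u → G.IsAncestor s z v := by
    rintro z (rfl | rfl | hz)
    · exact Relation.ReflTransGen.refl
    · exact Relation.ReflTransGen.single h
    · exact (Relation.ReflTransGen.single hz).tail h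
  exact hG.isAncestor_total (key y (eq_or_eq_or_isChild_of_mem_star hG h hy))
    (key x (eq_or_eq_or_isChild_of_mem_star hG h hx))

/-- The staircase diagram of stars of a rooted tree. -/
def starDiagram (hG : G.IsTree) (s : V) (E : Set V)
    (hE' : ∀ x y, G.IsChild s x y → ∃ z, G.IsChild s x z ∧ z ∉ E) : StaircaseDiagram G where
  blocks := star G s E '' starCenters G s E
  le := starLE G s E
  le_refl := by
    rintro _ ⟨x, -, rfl⟩
    exact starLE_star_iff.2 Relation.ReflTransGen.refl
  le_trans := by
    rintro _ ⟨x, -, rfl⟩ _ ⟨y, -, rfl⟩ _ ⟨z, -, rfl⟩ h h'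
    rw [starLE_star_iff] at *
    exact Relation.ReflTransGen.trans h' h
  le_antisymm := by
    rintro _ ⟨x, -, rfl⟩ _ ⟨y, -, rfl⟩ h h'
    rw [starLE_star_iff] at *
    rw [IsAncestor.antisymm h h']
  nonempty := by
    rintro _ ⟨x, -, rfl⟩
    exact ⟨x, Or.inl rfl⟩
  conn := by
    rintro _ ⟨x, -, rfl⟩
    exact star_connected E x
  cover_conn := by
    rintro _ ⟨y, -, rfl⟩ _ ⟨x, -, rfl⟩ ⟨h, hne, hno⟩
    rw [starLE_star_iff] at h
    rcases Relation.ReflTransGen.cases_tail h with hxy | ⟨p, h1, h2⟩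
    · exact absurd (congrArg _ hxy) hne
    by_cases hp : p = y
    · exact star_union_connected E (hp ▸ h2)
    · refine absurd ⟨_, ⟨p, Or.inr ⟨x, h2⟩, rfl⟩, ⟨starLE_star_iff.2 (.single h2), ?_⟩,
        starLE_star_iff.2 h1, fun hc => hp (star_injective E hc)⟩ hno
      intro hc
      rw [star_injective E hc] at h2
      exact h2.1.ne rfl
  chain_vertex := by
    rintro v _ ⟨x, -, rfl⟩ _ ⟨y, -, rfl⟩ hx hy
    rw [starLE_star_iff, starLE_star_iff]
    have key : ∀ z, v ∈ star G s E z → G.IsAncestor s z v := by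
      rintro z (rfl | hz)
      · exact Relation.ReflTransGen.refl
      · exact Relation.ReflTransGen.single hz.1
    exact hG.isAncestor_total (key y hy) (key x hx)
  chain_adj := by
    rintro u v huv _ ⟨x, -, rfl⟩ _ ⟨y, -, rfl⟩ hx hy
    rw [starLE_star_iff, starLE_star_iff]
    rcases hG.isChild_or_isChild (s := s) huv with h | h
    · exact isAncestor_total_of_mem_star hG h hx hy
    · exact isAncestor_total_of_mem_star hG h hx.symm hy.symm
  saturated_adj := by
    rintro u - - _ ⟨x, -, rfl⟩ _ ⟨y, -, rfl⟩ _ ⟨z, -, rfl⟩ hx hy - hxz hxz' hzy hzy'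
    rw [starLE_star_iff] at hxz hzy
    exfalso
    have hxz1 : x ≠ z := fun h => hxz' (congrArg _ h)
    have hzy1 : z ≠ y := fun h => hzy' (congrArg _ h)
    have hd := hxz.dist_le
    have hd' := hzy.dist_le
    rcases hx with rfl | hx <;> rcases hy with rfl | hy
    · exact hxz1 (hxz.antisymm hzy).symm
    · exact hzy1 ((hG.isAncestor_of_isChild_of_ne hy.1 hxz hxz1.symm).antisymm hzy)
    · have := hx.1.2
      omega
    · rw [hG.isChild_left_unique hx.1 hy.1] at hxz hxz1
      exact hxz1 (hxz.antisymm hzy).symm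
  min_exists := by
    rintro _ ⟨x, -, rfl⟩
    refine ⟨x, Or.inl rfl, ?_⟩
    rintro _ ⟨y, -, rfl⟩ (rfl | hy)
    · exact starLE_star_iff.2 Relation.ReflTransGen.refl
    · exact starLE_star_iff.2 (Relation.ReflTransGen.single hy.1)
  max_exists := by
    rintro _ ⟨x, hx, rfl⟩
    rcases hx with hx | ⟨y, hy⟩
    · refine ⟨x, Or.inl rfl, ?_⟩
      rintro _ ⟨y, -, rfl⟩ (rfl | hy)
      · exact starLE_star_iff.2 Relation.ReflTransGen.refl
      · exact absurd hx hy.2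
    · obtain ⟨z, hz, hzE⟩ := hE' x y hy
      refine ⟨z, Or.inr ⟨hz, hzE⟩, ?_⟩
      rintro _ ⟨w, -, rfl⟩ (rfl | hw)
      · exact starLE_star_iff.2 (Relation.ReflTransGen.single hz)
      · rw [hG.isChild_left_unique hw.1 hz]
        exact starLE_star_iff.2 Relation.ReflTransGen.refl

/-- The conclusion of the chain hypothesis, applied to diagrams of stars. -/
lemma isAncestor_total_of_mem_starCenters (hG : G.IsTree)
    (hleaf : {t | G.Adj s t}.Subsingleton)
    (hchain : ∀ D : StaircaseDiagram G,
      D.FullySupported → D.Elementary → D.InZplus s → D.IsChainDiagram)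
    {E : Set V} (hE : ∀ x ∈ E, ∀ y, ¬ G.IsChild s x y)
    (hE' : ∀ x y, G.IsChild s x y → ∃ z, G.IsChild s x z ∧ z ∉ E)
    {x y : V} (hx : x ∈ starCenters G s E) (hy : y ∈ starCenters G s E) :
    G.IsAncestor s x y ∨ G.IsAncestor s y x := by
  have hs : s ∈ starCenters G s E := by
    by_cases hxs : x = s
    · exact hxs ▸ hx
    · obtain h | ⟨z, hz, -⟩ := Relation.ReflTransGen.cases_head (hG.isAncestor_root (s := s) x)
      · exact absurd h.symm hxs
      · exact Or.inr ⟨z, hz⟩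
  let D := starDiagram hG s E hE'
  have hmem : ∀ v, v ∈ starCenters G s E → star G s E v ∈ D.blocks := fun v hv => ⟨v, hv, rfl⟩
  have hfull : D.FullySupported := by
    refine Set.eq_univ_of_forall fun v => Set.mem_iUnion₂.2 ?_
    by_cases hv : v ∈ starCenters G s E
    · exact ⟨_, hmem v hv, Or.inl rfl⟩
    · obtain ⟨p, hp⟩ := hG.exists_isChild_of_ne (s := s) (x := v) (fun h => hv (h ▸ hs))
      exact ⟨_, hmem p (Or.inr ⟨v, hp⟩), Or.inr ⟨hp, fun h => hv (Or.inl h)⟩⟩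
  have helem : D.Elementary := by
    intro v hv
    refine ⟨hfull ▸ Set.mem_univ v, ?_⟩
    by_cases hvs : v = s
    · exact fun a ha b hb => hleaf (hvs ▸ ha.2) (hvs ▸ hb.2)
    by_cases hc : ∃ y, G.IsChild s v y
    · obtain ⟨y, hy⟩ := hc
      obtain ⟨p, hp⟩ := hG.exists_isChild_of_ne hvs
      have := hv.2 ⟨hmem v (Or.inr ⟨y, hy⟩), Or.inl rfl⟩
        ⟨hmem p (Or.inr ⟨v, hp⟩), Or.inr ⟨hp, fun h => hE v h y hy⟩⟩
      rw [star_injective E this] at hp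
      exact absurd rfl hp.1.ne
    · push Not at hc
      intro a ha b hb
      exact hG.isChild_left_unique ((hG.isChild_or_isChild ha.2).resolve_left (hc a))
        ((hG.isChild_or_isChild hb.2).resolve_left (hc b))
  have hZ : D.InZplus s := by
    refine ⟨_, hmem s hs, Or.inl rfl, ?_⟩
    rintro _ ⟨z, -, rfl⟩ h
    rw [(starLE_star_iff.1 h).antisymm (hG.isAncestor_root z)]
  exact (hchain D hfull helem hZ _ (hmem y hy) _ (hmem x hx)).imp
    starLE_star_iff.1 starLE_star_iff.1

lemma isAncestor_total_of_isChild (hG : G.IsTree) (hleaf : {t | G.Adj s t}.Subsingleton)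
    (hchain : ∀ D : StaircaseDiagram G,
      D.FullySupported → D.Elementary → D.InZplus s → D.IsChainDiagram)
    {a b c : V} (ha : G.IsChild s a c) : G.IsAncestor s a b ∨ G.IsAncestor s b a := by
  have key : ∀ b, (∃ d, G.IsChild s b d) → G.IsAncestor s a b ∨ G.IsAncestor s b a :=
    fun b hb => isAncestor_total_of_mem_starCenters hG hleaf hchain (E := ∅)
      (by simp) (fun x y h => ⟨y, h, by simp⟩) (Or.inr ⟨c, ha⟩) (Or.inr hb)
  by_cases hb : ∃ d, G.IsChild s b d
  · exact key b hb
  by_contra hcon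
  by_cases hbs : b = s
  · exact hcon (Or.inr (hbs ▸ hG.isAncestor_root a))
  obtain ⟨q, hq⟩ := hG.exists_isChild_of_ne hbs
  rcases key q ⟨b, hq⟩ with h | h
  · exact hcon (Or.inl (Relation.ReflTransGen.tail h hq))
  obtain rfl | ⟨c', hc', hca⟩ := Relation.ReflTransGen.cases_head h
  · exact hcon (Or.inl (Relation.ReflTransGen.single hq))
  refine hcon (isAncestor_total_of_mem_starCenters hG hleaf hchain (E := {b}) ?_ ?_
    (Or.inr ⟨c, ha⟩) (Or.inl rfl))
  · rintro x rfl y hy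
    exact hb ⟨y, hy⟩
  · intro x y hy
    by_cases hyb : y = b
    · subst hyb
      refine ⟨c', (hG.isChild_left_unique hq hy) ▸ hc', ?_⟩
      rintro rfl
      exact hcon (Or.inr hca)
    · exact ⟨y, hy, hyb⟩

lemma eq_of_isAncestor_of_childless {x y : V} (hx : ∀ z, ¬ G.IsChild s x z)
    (h : G.IsAncestor s x y) : x = y := by
  obtain h | ⟨z, hz, -⟩ := Relation.ReflTransGen.cases_head h
  · exact h
  · exact absurd hz (hx z)

lemma not_three_childless (hG : G.IsTree) (hleaf : {t | G.Adj s t}.Subsingleton)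
    (hchain : ∀ D : StaircaseDiagram G,
      D.FullySupported → D.Elementary → D.InZplus s → D.IsChainDiagram)
    {x y z : V} (hx : ∀ w, ¬ G.IsChild s x w) (hy : ∀ w, ¬ G.IsChild s y w)
    (hz : ∀ w, ¬ G.IsChild s z w) (hxy : x ≠ y) (hxz : x ≠ z) (hyz : y ≠ z) : False := by
  have root : ∀ u v : V, (∀ w, ¬ G.IsChild s u w) → u ≠ v → u ≠ s := by
    rintro u v hu huv rfl
    exact huv (eq_of_isAncestor_of_childless hu (hG.isAncestor_root v))
  have par : ∀ {u v p q : V}, G.IsChild s p u → G.IsChild s q v → (∀ w, ¬ G.IsChild s v w) →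
      G.IsAncestor s p q := by
    intro u v p q hp hq hv
    rcases isAncestor_total_of_isChild hG hleaf hchain (b := v) hp with h | h
    · exact hG.isAncestor_of_isChild_of_ne hq h (fun e => hv u (e ▸ hp))
    · have := eq_of_isAncestor_of_childless hv h
      exact absurd hp (this ▸ hv u)
  obtain ⟨p, hp⟩ := hG.exists_isChild_of_ne (root x y hx hxy)
  obtain ⟨q, hq⟩ := hG.exists_isChild_of_ne (root y z hy hyz)
  obtain ⟨r, hr⟩ := hG.exists_isChild_of_ne (root z x hz hxz.symm)
  have hpr : p = r := (par hp hr hz).antisymm (par hr hp hx)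
  have hqr : q = r := (par hq hr hz).antisymm (par hr hq hy)
  subst hpr hqr
  have := isAncestor_total_of_mem_starCenters hG hleaf hchain (E := {x, y})
    (by rintro u (rfl | rfl); exacts [hx, hy])
    (by
      intro u v hv
      by_cases hvE : v ∈ ({x, y} : Set V)
      · refine ⟨z, ?_, ?_⟩
        · rcases hvE with rfl | rfl
          · exact hG.isChild_left_unique hp hv ▸ hr
          · exact hG.isChild_left_unique hq hv ▸ hr
        · rintro (h | h)
          exacts [hxz h.symm, hyz h.symm]
      · exact ⟨v, hv, hvE⟩)
    (x := x) (y := y) (Or.inl (Or.inl rfl)) (Or.inl (Or.inr rfl))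
  rcases this with h | h
  · exact hxy (eq_of_isAncestor_of_childless hx h)
  · exact hxy (eq_of_isAncestor_of_childless hy h).symm

lemma childless_of_incomparable (hG : G.IsTree) (hleaf : {t | G.Adj s t}.Subsingleton)
    (hchain : ∀ D : StaircaseDiagram G,
      D.FullySupported → D.Elementary → D.InZplus s → D.IsChainDiagram)
    {B B' : Set V} (hB : (G.induce B).Connected) (hB' : (G.induce B').Connected)
    (hs : s ∈ B) (hs' : s ∈ B') {a b : V} (ha : a ∈ B) (ha' : a ∉ B') (hb : b ∉ B)
    (hb' : b ∈ B') (c : V) : ¬ G.IsChild s a c := by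
  intro h
  rcases isAncestor_total_of_isChild hG hleaf hchain (b := b) h with h | h
  · exact ha' (hG.mem_of_isAncestor hB' hs' hb' h)
  · exact hb (hG.mem_of_isAncestor hB hs ha h)

variable (D : StaircaseDiagram G)

lemma eq_of_subset {A B : Set V} (hA : A ∈ D.blocks) (hB : B ∈ D.blocks) (h : A ⊆ B) :
    A = B := by
  obtain ⟨u, hu, hu'⟩ := D.min_exists A hA
  obtain ⟨v, hv, hv'⟩ := D.max_exists A hA
  exact D.le_antisymm A hA B hB (hu' B hB (h hu)) (hv' B hB (h hv))

lemma not_three_blocks (hG : G.IsTree) (hleaf : {t | G.Adj s t}.Subsingleton)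
    (hchain : ∀ D : StaircaseDiagram G,
      D.FullySupported → D.Elementary → D.InZplus s → D.IsChainDiagram)
    (hs : ∀ B ∈ D.blocks, s ∈ B) {A B C : Set V} (hA : A ∈ D.blocks) (hB : B ∈ D.blocks)
    (hC : C ∈ D.blocks) (hAB : D.le A B) (hBC : D.le B C) (hne : A ≠ B) (hne' : B ≠ C) :
    False := by
  obtain ⟨x, hx, hx'⟩ := D.max_exists A hA
  obtain ⟨y, hy, hy'⟩ := D.min_exists B hB
  obtain ⟨z, hz, hz'⟩ := D.min_exists C hC
  have hxB : x ∉ B := fun h => hne (D.le_antisymm A hA B hB hAB (hx' B hB h))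
  have hyA : y ∉ A := fun h => hne (D.le_antisymm A hA B hB hAB (hy' A hA h))
  have hzB : z ∉ B := fun h => hne' (D.le_antisymm B hB C hC hBC (hz' B hB h))
  have hzA : z ∉ A := fun h => hne' (D.le_antisymm B hB C hC hBC
    (D.le_trans C hC A hA B hB (hz' A hA h) hAB))
  have hxC : x ∉ C := fun h => hne (D.le_antisymm A hA B hB hAB
    (D.le_trans B hB C hC A hA hBC (hx' C hC h)))
  have cA := D.conn A hA
  have cB := D.conn B hB
  have cC := D.conn C hC
  exact not_three_childless hG hleaf hchain
    (childless_of_incomparable hG hleaf hchain cA cB (hs A hA) (hs B hB) hx hxB hyA hy)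
    (childless_of_incomparable hG hleaf hchain cB cA (hs B hB) (hs A hA) hy hyA hxB hx)
    (childless_of_incomparable hG hleaf hchain cC cA (hs C hC) (hs A hA) hz hzA hxC hx)
    (fun h => hxB (h ▸ hy)) (fun h => hxC (h ▸ hz)) (fun h => hzB (h ▸ hy))

/-- A vertex common to the least and the greatest block lies in every block that contains one of
its neighbours. -/
lemma mem_of_adj {m M : Set V} (hm : m ∈ D.blocks) (hM : M ∈ D.blocks)
    (hbot : ∀ C ∈ D.blocks, D.le m C) (htop : ∀ C ∈ D.blocks, D.le C M)
    {u v : V} (huv : G.Adj u v) (hum : u ∈ m) (huM : u ∈ M) {C : Set V}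
    (hC : C ∈ D.blocks) (hv : v ∈ C) : u ∈ C := by
  by_cases h1 : m = C
  · exact h1 ▸ hum
  by_cases h2 : C = M
  · exact h2 ▸ huM
  exact D.saturated_adj u v huv m hm M hM C hC hum huM (Or.inr hv) (hbot C hC) h1 (htop C hC) h2

lemma mem_of_bot_top (hG : G.IsTree) (hleaf : {t | G.Adj s t}.Subsingleton)
    (hchain : ∀ D : StaircaseDiagram G,
      D.FullySupported → D.Elementary → D.InZplus s → D.IsChainDiagram)
    {m M : Set V} (hm : m ∈ D.blocks) (hM : M ∈ D.blocks) (hsm : s ∈ m) (hsM : s ∈ M)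
    (hbot : ∀ C ∈ D.blocks, D.le m C) (htop : ∀ C ∈ D.blocks, D.le C M) :
    ∀ C ∈ D.blocks, s ∈ C := by
  by_cases hmM : m = M
  · intro C hC
    rw [D.le_antisymm C hC m hm (hmM ▸ htop C hC) (hbot C hC)]
    exact hsm
  obtain ⟨a, ha, ha'⟩ := Set.not_subset.1 fun h => hmM (D.eq_of_subset hm hM h)
  obtain ⟨b, hb, hb'⟩ := Set.not_subset.1 fun h => hmM (D.eq_of_subset hM hm h).symm
  have cm := D.conn m hm
  have cM := D.conn M hM
  have hal := childless_of_incomparable hG hleaf hchain cm cM hsm hsM ha ha' hb' hb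
  have hbl := childless_of_incomparable hG hleaf hchain cM cm hsM hsm hb hb' ha' ha
  have common : ∀ v, v ∈ m → v ∈ M → ∀ C ∈ D.blocks, v ∈ C → s ∈ C := by
    intro v
    have hv : G.IsAncestor s s v := hG.isAncestor_root v
    induction hv with
    | refl => exact fun _ _ _ _ h => h
    | @tail p v _ hpv ih =>
      intro h1 h2 C hC hvC
      have hpm := hG.mem_of_isAncestor cm hsm h1 (Relation.ReflTransGen.single hpv)
      have hpM := hG.mem_of_isAncestor cM hsM h2 (Relation.ReflTransGen.single hpv)
      exact ih hpm hpM C hC (D.mem_of_adj hm hM hbot htop hpv.1 hpm hpM hC hvC)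
  have parent : ∀ p c, G.IsChild s p c → p ∈ m ∧ p ∈ M := by
    intro p c hp
    constructor
    · rcases isAncestor_total_of_isChild hG hleaf hchain (b := a) hp with h | h
      · exact hG.mem_of_isAncestor cm hsm ha h
      · exact eq_of_isAncestor_of_childless hal h ▸ ha
    · rcases isAncestor_total_of_isChild hG hleaf hchain (b := b) hp with h | h
      · exact hG.mem_of_isAncestor cM hsM hb h
      · exact eq_of_isAncestor_of_childless hbl h ▸ hb
  intro C hC
  obtain ⟨z, hz⟩ := D.nonempty C hC
  by_cases hzs : z = s
  · exact hzs ▸ hz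
  obtain ⟨p, hp⟩ := hG.exists_isChild_of_ne hzs
  obtain ⟨hpm, hpM⟩ := parent p z hp
  exact common p hpm hpM C hC (D.mem_of_adj hm hM hbot htop hp.1 hpm hpM hC hz)

end StaircaseDiagram

/-- over a tree with a distinguished leaf `s`, if every fully
supported elementary staircase diagram with `s` in a maximal block is a chain,
then a fully supported elementary diagram lies in `Z⁺ ∩ Z⁻` iff every block
contains `s`. -/
theorem StaircaseDiagram.mem_Zplus_and_Zminus_iff {V : Type*} {G : SimpleGraph V}
    (hG : G.IsTree) (s : V) (hleaf : {t | G.Adj s t}.Subsingleton)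
    (hchain : ∀ D : StaircaseDiagram G,
      D.FullySupported → D.Elementary → D.InZplus s → D.IsChainDiagram)
    (D : StaircaseDiagram G) (hfull : D.FullySupported) (helem : D.Elementary) :
    (D.InZplus s ∧ D.InZminus s) ↔ ∀ B ∈ D.blocks, s ∈ B := by
  constructor
  · rintro ⟨hp, m, hm, hsm, hmin⟩
    have hD := hchain D hfull helem hp
    obtain ⟨M, hM, hsM, hmax⟩ := hp
    refine D.mem_of_bot_top hG hleaf hchain hm hM hsm hsM (fun C hC => ?_) (fun C hC => ?_)
    · rcases hD m hm C hC with h | h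
      · exact h
      · exact hmin C hC h ▸ D.le_refl C hC
    · rcases hD C hC M hM with h | h
      · exact h
      · exact hmax C hC h ▸ D.le_refl C hC
  · intro hs
    obtain ⟨B₀, hB₀, -⟩ : ∃ B ∈ D.blocks, s ∈ B := by
      simpa [StaircaseDiagram.support] using
        (hfull.symm ▸ Set.mem_univ s : s ∈ D.support)
    constructor
    · by_contra hcon
      have next : ∀ B ∈ D.blocks, ∃ B' ∈ D.blocks, D.le B B' ∧ B' ≠ B := by
        intro B hB
        by_contra h
        push Not at h
        exact hcon ⟨B, hB, hs B hB, h⟩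
      obtain ⟨B₁, hB₁, h₁, hne₁⟩ := next B₀ hB₀
      obtain ⟨B₂, hB₂, h₂, hne₂⟩ := next B₁ hB₁
      exact D.not_three_blocks hG hleaf hchain hs hB₀ hB₁ hB₂ h₁ h₂ hne₁.symm hne₂.symm
    · by_contra hcon
      have prev : ∀ B ∈ D.blocks, ∃ B' ∈ D.blocks, D.le B' B ∧ B' ≠ B := by
        intro B hB
        by_contra h
        push Not at h
        exact hcon ⟨B, hB, hs B hB, h⟩
      obtain ⟨B₁, hB₁, h₁, hne₁⟩ := prev B₀ hB₀
      obtain ⟨B₂, hB₂, h₂, hne₂⟩ := prev B₁ hB₁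
      exact D.not_three_blocks hG hleaf hchain hs hB₂ hB₁ hB₀ h₂ h₁ hne₂ hne₁
end

section
/- Let w = vu be a parabolic decomposition in a Coxeter group (v ∈ W^J, u ∈ W_J) and let s ∈ D_L(u) with s not in the support S(v). Then s ∈ D_L(w) if and only if s is not adjacent (in the Coxeter graph) to any element of S(v). -/
variable {B : Type*} {W : Type*} [Group W] {M : CoxeterMatrix B}

/-- The standard parabolic subgroup `W_J`. -/
def CoxeterSystem.parabolic (cs : CoxeterSystem M W) (J : Set B) : Subgroup W :=
  Subgroup.closure (cs.simple '' J)

/-- `v` is a minimal length representative of its coset `v W_J`. -/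
def CoxeterSystem.IsMinimalRep (cs : CoxeterSystem M W) (J : Set B) (v : W) :
    Prop :=
  ∀ u ∈ cs.parabolic J, cs.length v ≤ cs.length (v * u)

/-- The support `S(w)`: the smallest set of simple reflections generating a
standard parabolic subgroup containing `w`. -/
def CoxeterSystem.support (cs : CoxeterSystem M W) (w : W) : Set B :=
  {i | ∀ J : Set B, w ∈ cs.parabolic J → i ∈ J}

namespace CoxeterSystem

open List Real Module

section Exchange

/-- The permutation of `W × ZMod 2` attached to a simple reflection: it conjugates the first
coordinate and flips the second one exactly at the reflection itself. -/
noncomputable def signedConj (cs : CoxeterSystem M W) (i : B) : Function.End (W × ZMod 2) :=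
  open Classical in
  fun p ↦ (cs.simple i * p.1 * cs.simple i, p.2 + if p.1 = cs.simple i then 1 else 0)

open Classical in
theorem prod_map_signedConj (cs : CoxeterSystem M W) (ω : List B) (p : W × ZMod 2) :
    (ω.map cs.signedConj).prod p =
      (cs.wordProd ω * p.1 * (cs.wordProd ω)⁻¹, p.2 + ((cs.rightInvSeq ω).count p.1 : ℕ)) := by
  induction ω with
  | nil => simp [Function.End.one_def]
  | cons i ω ih =>
    rw [map_cons, prod_cons]
    change cs.signedConj i ((ω.map cs.signedConj).prod p) = _
    rw [ih]
    have h : cs.wordProd ω * p.1 * (cs.wordProd ω)⁻¹ = cs.simple i ↔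
        (cs.wordProd ω)⁻¹ * cs.simple i * cs.wordProd ω = p.1 := by
      constructor <;> intro h
      · rw [← h]; group
      · rw [← h]; group
    simp only [signedConj, h, rightInvSeq, wordProd_cons, count_cons, beq_iff_eq]
    refine Prod.ext ?_ ?_
    · simp [mul_assoc]
    · split_ifs <;> simp [add_assoc]

theorem prod_map_alternatingWord_two_mul {G : Type*} [Monoid G] (f : B → G) (i j : B) (m : ℕ) :
    ((alternatingWord i j (2 * m)).map f).prod = (f i * f j) ^ m := by
  induction m with
  | zero => simp [alternatingWord]
  | succ m ih =>
    rw [show 2 * (m + 1) = 2 * m + 1 + 1 by ring, alternatingWord_succ', alternatingWord_succ']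
    simp [ih, pow_succ', mul_assoc]

theorem rightInvSeq_eq_map_leftInvSeq (cs : CoxeterSystem M W) (ω : List B) :
    cs.rightInvSeq ω = (cs.leftInvSeq ω).map (MulAut.conj (cs.wordProd ω)⁻¹) := by
  induction ω with
  | nil => simp
  | cons i ω ih =>
    rw [rightInvSeq, leftInvSeq, map_cons, map_map, ih, wordProd_cons]
    congr 1
    · simp [mul_assoc]
    · refine map_congr_left fun t _ ↦ ?_
      simp [mul_assoc]

open Classical in
theorem even_count_rightInvSeq_alternatingWord (cs : CoxeterSystem M W) (i j : B) (t : W) :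
    Even ((cs.rightInvSeq (alternatingWord i j (2 * M i j))).count t) := by
  have hprod : cs.wordProd (alternatingWord i j (2 * M i j)) = 1 := by
    simp [prod_alternatingWord_eq_mul_pow]
  have hlen : (cs.leftInvSeq (alternatingWord i j (2 * M i j))).length = 2 * M i j := by simp
  have hhalves : (cs.leftInvSeq (alternatingWord i j (2 * M i j))).drop (M i j) =
      (cs.leftInvSeq (alternatingWord i j (2 * M i j))).take (M i j) := by
    refine List.ext_getElem (by simp; omega) fun k h₁ h₂ ↦ ?_
    rw [length_take, hlen] at h₂
    rw [getElem_drop, getElem_take, getElem_leftInvSeq_alternatingWord _ _ _ _ _ (by omega),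
      getElem_leftInvSeq_alternatingWord _ _ _ _ _ (by omega), prod_alternatingWord_eq_mul_pow,
      prod_alternatingWord_eq_mul_pow, show (2 * (M i j + k) + 1) / 2 = M i j + k by omega,
      show (2 * k + 1) / 2 = k by omega, pow_add, simple_mul_simple_pow', one_mul]
    simp
  rw [rightInvSeq_eq_map_leftInvSeq, hprod, inv_one, map_one]
  rw [show (⇑(1 : MulAut W) : W → W) = id from rfl, map_id,
    ← take_append_drop (M i j) (cs.leftInvSeq _), count_append, hhalves]
  exact ⟨_, rfl⟩

theorem isLiftable_signedConj (cs : CoxeterSystem M W) : M.IsLiftable cs.signedConj := by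
  classical
  intro i j
  funext p
  rw [← prod_map_alternatingWord_two_mul, prod_map_signedConj, Function.End.one_def]
  have h := (cs.even_count_rightInvSeq_alternatingWord i j p.1).natCast_zmod_two
  refine Prod.ext ?_ ?_
  · simp [prod_alternatingWord_eq_mul_pow]
  · simp [h]

open Classical in
theorem count_rightInvSeq_eq_of_wordProd_eq (cs : CoxeterSystem M W) {ω ω' : List B}
    (h : cs.wordProd ω = cs.wordProd ω') (t : W) :
    ((cs.rightInvSeq ω).count t : ZMod 2) = ((cs.rightInvSeq ω').count t : ZMod 2) := by
  have key (ω : List B) : (ω.map cs.signedConj).prod =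
      cs.lift ⟨cs.signedConj, cs.isLiftable_signedConj⟩ (cs.wordProd ω) := by
    rw [wordProd, map_list_prod, map_map]
    congr 2
    funext i
    simp [cs.lift_apply_simple cs.isLiftable_signedConj]
  have happ := congrFun ((key ω).trans ((congrArg _ h).trans (key ω').symm)) (t, 0)
  simpa [prod_map_signedConj] using congrArg Prod.snd happ

/-- The exchange property for right descents. -/
theorem IsRightDescent.exists_wordProd_mul_eq {cs : CoxeterSystem M W} {ω : List B} {i : B}
    (h : cs.IsRightDescent (cs.wordProd ω) i) :
    ∃ j < ω.length, cs.wordProd ω * cs.simple i = cs.wordProd (ω.eraseIdx j) := by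
  classical
  obtain ⟨τ, hτ, hτw⟩ := cs.exists_isReduced (cs.wordProd ω * cs.simple i)
  have hprod : cs.wordProd (τ.concat i) = cs.wordProd ω := by
    rw [wordProd_concat, ← hτw]; simp
  have hred : cs.IsReduced (τ.concat i) := by
    have := cs.isRightDescent_iff.1 h
    rw [IsReduced, hprod, ← this, hτw, hτ.eq]
    simp
  have hcount : (cs.rightInvSeq (τ.concat i)).count (cs.simple i) = 1 :=
    List.count_eq_one_of_mem hred.nodup_rightInvSeq (by rw [rightInvSeq_concat]; simp)
  have hmem : cs.simple i ∈ cs.rightInvSeq ω := by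
    by_contra hn
    have := cs.count_rightInvSeq_eq_of_wordProd_eq hprod (cs.simple i)
    rw [hcount, List.count_eq_zero_of_not_mem hn] at this
    simp at this
  obtain ⟨j, hj, hji⟩ := List.getElem_of_mem hmem
  refine ⟨j, by simpa using hj, ?_⟩
  rw [← wordProd_mul_getD_rightInvSeq, List.getD_eq_getElem _ _ hj, hji]

/-- The exchange property for left descents. -/
theorem IsLeftDescent.exists_simple_mul_wordProd_eq {cs : CoxeterSystem M W} {ω : List B} {i : B}
    (h : cs.IsLeftDescent (cs.wordProd ω) i) :
    ∃ j < ω.length, cs.simple i * cs.wordProd ω = cs.wordProd (ω.eraseIdx j) := by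
  rw [← isRightDescent_inv_iff, ← wordProd_reverse] at h
  obtain ⟨j, hj, hji⟩ := h.exists_wordProd_mul_eq
  rw [length_reverse] at hj
  refine ⟨ω.length - j - 1, by omega, ?_⟩
  apply inv_injective
  rw [← wordProd_reverse, mul_inv_rev, ← wordProd_reverse, inv_simple, hji]
  rw [eraseIdx_eq_take_drop_succ, eraseIdx_eq_take_drop_succ, reverse_append, take_reverse,
    drop_reverse, show ω.length - j - 1 + 1 = ω.length - j by omega, Nat.sub_sub]

end Exchange

section Geometric

variable (M) in
/-- The linear form `y ↦ 2 B(αᵢ, y)` on the space of the geometric representation, where `B` is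
Tits's bilinear form. When `M i j = 0` (no relation), the value at `αⱼ` is `-2`. -/
noncomputable def simpleCoroot (i : B) : Dual ℝ (B →₀ ℝ) :=
  Finsupp.linearCombination ℝ fun j ↦ -2 * cos (π / M i j)

theorem simpleCoroot_single (i j : B) (a : ℝ) :
    simpleCoroot M i (Finsupp.single j a) = a * (-2 * cos (π / M i j)) := by
  simp [simpleCoroot]

theorem simpleCoroot_single_self (i : B) : simpleCoroot M i (Finsupp.single i 1) = 2 := by
  simp [simpleCoroot]

variable (M) in
/-- The reflection by which `i` acts in the geometric representation. -/
noncomputable def geomReflection (i : B) : (B →₀ ℝ) ≃ₗ[ℝ] (B →₀ ℝ) :=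
  reflection (simpleCoroot_single_self (M := M) i)

theorem geomReflection_apply (i : B) (y : B →₀ ℝ) :
    geomReflection M i y = y - simpleCoroot M i y • Finsupp.single i 1 :=
  reflection_apply _ _

theorem isLiftable_geomReflection : M.IsLiftable (geomReflection M) := by
  intro i j
  obtain rfl | hij := eq_or_ne i j
  · rw [M.diagonal, pow_one]
    refine LinearEquiv.ext fun y ↦ ?_
    exact involutive_reflection (simpleCoroot_single_self (M := M) i) y
  obtain h0 | hpos := Nat.eq_zero_or_pos (M i j)
  · rw [h0, pow_zero]
  have h1 := M.off_diagonal i j hij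
  set m := M i j with hm
  have hfy : simpleCoroot M i (Finsupp.single j 1) = -2 * cos (π / m) := by
    simp [simpleCoroot_single, hm]
  have hgx : simpleCoroot M j (Finsupp.single i 1) = -2 * cos (π / m) := by
    simp [simpleCoroot_single, hm, M.symmetric j i]
  refine LinearEquiv.ext fun z ↦ ?_
  have ht : 2 * cos (2 * π / m) = simpleCoroot M i (Finsupp.single j 1) *
      simpleCoroot M j (Finsupp.single i 1) - 2 := by
    rw [hfy, hgx, mul_div_assoc, cos_two_mul]; ring
  rw [geomReflection, geomReflection, reflection_mul_reflection_pow_apply _ _ m z _ ht]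
  obtain h2 | h3 : m = 2 ∨ 3 ≤ m := by omega
  · rw [hfy, hgx, h2]
    norm_num
    module
  have hm0 : (m : ℝ) ≠ 0 := by positivity
  have hsin : sin (2 * π / m) ≠ 0 := by
    refine (sin_pos_of_pos_of_lt_pi (by positivity) ?_).ne'
    rw [div_lt_iff₀ (by positivity)]
    have : (3 : ℝ) ≤ m := by exact_mod_cast h3
    nlinarith [pi_pos]
  have hS (n : ℤ) : (Polynomial.Chebyshev.S ℝ n).eval (2 * cos (2 * π / m)) =
      sin ((n + 1) * (2 * π / m)) / sin (2 * π / m) := by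
    rw [eq_div_iff hsin, Polynomial.Chebyshev.S_two_mul_real_cos]
  obtain ⟨k, hk | hk⟩ := Nat.even_or_odd' m
  · have hz : (Polynomial.Chebyshev.S ℝ (k - 1)).eval (2 * cos (2 * π / m)) = 0 := by
      rw [hS]
      have : ((((k : ℤ) - 1 : ℤ) : ℝ) + 1) * (2 * π / m) = π := by
        have hk' : (m : ℝ) = 2 * k := by exact_mod_cast hk
        push_cast
        field_simp
        rw [hk']; ring
      rw [this, sin_pi, zero_div]
    rw [show ((m : ℤ) - 2) / 2 = k - 1 by omega, show ((m : ℤ) - 1) / 2 = k - 1 by omega, hz]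
    simp
  · have hz : (Polynomial.Chebyshev.S ℝ k).eval (2 * cos (2 * π / m)) +
        (Polynomial.Chebyshev.S ℝ (k - 1)).eval (2 * cos (2 * π / m)) = 0 := by
      rw [hS, hS, ← add_div]
      have : (((k : ℤ) : ℝ) + 1) * (2 * π / m) =
          2 * π - ((((k : ℤ) - 1 : ℤ) : ℝ) + 1) * (2 * π / m) := by
        have hk' : (m : ℝ) = 2 * k + 1 := by exact_mod_cast hk
        push_cast
        field_simp
        rw [hk']; ring
      rw [this, sin_two_pi_sub, neg_add_cancel, zero_div]
    rw [show ((m : ℤ) - 2) / 2 = k - 1 by omega, show ((m : ℤ) - 1) / 2 = k by omega,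
      show ((m : ℤ) - 3) / 2 = k - 1 by omega, show (m : ℤ) / 2 = k by omega, hz]
    simp

/-- The geometric representation of a Coxeter group. -/
noncomputable def geomRep (cs : CoxeterSystem M W) : W →* ((B →₀ ℝ) ≃ₗ[ℝ] (B →₀ ℝ)) :=
  cs.lift ⟨geomReflection M, isLiftable_geomReflection⟩

theorem geomRep_simple_apply (cs : CoxeterSystem M W) (i : B) (y : B →₀ ℝ) :
    cs.geomRep (cs.simple i) y = y - simpleCoroot M i y • Finsupp.single i 1 := by
  rw [geomRep, cs.lift_apply_simple isLiftable_geomReflection, geomReflection_apply]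

theorem simple_mem_parabolic (cs : CoxeterSystem M W) {J : Set B} {i : B} (hi : i ∈ J) :
    cs.simple i ∈ cs.parabolic J :=
  Subgroup.subset_closure ⟨i, hi, rfl⟩

/-- An element of `W_J` does not change the coordinates outside `J` in the geometric
representation. -/
theorem geomRep_apply_apply_of_mem_parabolic (cs : CoxeterSystem M W) {J : Set B} {w : W}
    (hw : w ∈ cs.parabolic J) {i : B} (hi : i ∉ J) (y : B →₀ ℝ) : cs.geomRep w y i = y i := by
  induction hw using Subgroup.closure_induction generalizing y with
  | mem w hw =>
    obtain ⟨j, hj, rfl⟩ := hw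
    have hji : j ≠ i := fun h ↦ hi (h ▸ hj)
    simp [geomRep_simple_apply, hji]
  | one => simp
  | mul a b _ _ ha hb => rw [map_mul, LinearEquiv.mul_apply, ha, hb]
  | inv a _ ha =>
    rw [← ha, ← LinearEquiv.mul_apply, ← map_mul, mul_inv_cancel, map_one, LinearEquiv.coe_one, id]

theorem simple_mem_parabolic_iff (cs : CoxeterSystem M W) {J : Set B} {i : B} :
    cs.simple i ∈ cs.parabolic J ↔ i ∈ J := by
  refine ⟨fun h ↦ ?_, cs.simple_mem_parabolic⟩
  by_contra hi
  have := cs.geomRep_apply_apply_of_mem_parabolic h hi (Finsupp.single i 1)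
  rw [geomRep_simple_apply, simpleCoroot_single_self] at this
  norm_num at this

theorem eq_two_of_simple_mul_simple_mul_simple_mem_parabolic (cs : CoxeterSystem M W) {J : Set B}
    {i j : B} (hi : i ∉ J) (hj : j ∈ J)
    (h : cs.simple i * cs.simple j * cs.simple i ∈ cs.parabolic J) : M i j = 2 := by
  have hij : i ≠ j := fun h ↦ hi (h ▸ hj)
  have hc : cos (π / M i j) = 0 := by
    have := cs.geomRep_apply_apply_of_mem_parabolic h hi (Finsupp.single i 1)
    simp only [map_mul, LinearEquiv.mul_apply, geomRep_simple_apply, map_sub, map_smul,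
      simpleCoroot_single, M.symmetric j i] at this
    simp [hij] at this
    nlinarith
  obtain h0 | hpos := Nat.eq_zero_or_pos (M i j)
  · simp [h0] at hc
  have h1 := M.off_diagonal i j hij
  by_contra h2
  have h3 : 3 ≤ M i j := by omega
  have h3' : (3 : ℝ) ≤ M i j := by exact_mod_cast h3
  refine (cos_pos_of_mem_Ioo ⟨?_, ?_⟩).ne' hc
  · have : 0 ≤ π / M i j := by positivity
    linarith [pi_pos]
  · rw [div_lt_iff₀ (by positivity)]
    nlinarith [pi_pos]

end Geometric

section Parabolic

theorem wordProd_mem_parabolic (cs : CoxeterSystem M W) {J : Set B} {ω : List B}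
    (hω : ∀ i ∈ ω, i ∈ J) : cs.wordProd ω ∈ cs.parabolic J :=
  Subgroup.list_prod_mem _ fun _ hx ↦ by
    obtain ⟨i, hi, rfl⟩ := mem_map.1 hx
    exact cs.simple_mem_parabolic (hω i hi)

theorem exists_isReduced_of_mem_parabolic (cs : CoxeterSystem M W) {J : Set B} {w : W}
    (hw : w ∈ cs.parabolic J) :
    ∃ ω : List B, cs.IsReduced ω ∧ w = cs.wordProd ω ∧ ∀ i ∈ ω, i ∈ J := by
  have step : ∀ i ∈ J, ∀ w, (∃ ω : List B, cs.IsReduced ω ∧ w = cs.wordProd ω ∧ ∀ i ∈ ω, i ∈ J) →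
      ∃ ω : List B, cs.IsReduced ω ∧ cs.simple i * w = cs.wordProd ω ∧ ∀ i ∈ ω, i ∈ J := by
    rintro i hi _ ⟨ω, hω, rfl, hJ⟩
    by_cases h : cs.IsLeftDescent (cs.wordProd ω) i
    · obtain ⟨j, hj, hji⟩ := h.exists_simple_mul_wordProd_eq
      refine ⟨ω.eraseIdx j, ?_, hji, fun k hk ↦ hJ k (mem_of_mem_eraseIdx hk)⟩
      have := cs.isLeftDescent_iff.1 h
      rw [hω.eq, hji] at this
      rw [IsReduced, length_eraseIdx_of_lt hj]
      omega
    · refine ⟨i :: ω, ?_, by rw [wordProd_cons], by simpa [hi] using hJ⟩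
      rw [IsReduced, wordProd_cons, cs.not_isLeftDescent_iff.1 h, hω.eq, length_cons]
  induction hw using Subgroup.closure_induction_left with
  | one => exact ⟨[], by simp [IsReduced], by simp, by simp⟩
  | mul_left x hx y _ ih =>
    obtain ⟨i, hi, rfl⟩ := hx
    exact step i hi y ih
  | inv_mul_cancel x hx y _ ih =>
    obtain ⟨i, hi, rfl⟩ := hx
    rw [inv_simple]
    exact step i hi y ih

/-- Every letter of a reduced word of an element of `W_J` lies in `J`. -/
theorem IsReduced.mem_of_wordProd_mem_parabolic {cs : CoxeterSystem M W} {J : Set B} {ω : List B}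
    (hω : cs.IsReduced ω) (hw : cs.wordProd ω ∈ cs.parabolic J) : ∀ i ∈ ω, i ∈ J := by
  induction ω with
  | nil => simp
  | cons a ω ih =>
    have hω' : cs.IsReduced ω := hω.drop 1
    obtain ⟨τ, -, hτ, hτJ⟩ := cs.exists_isReduced_of_mem_parabolic hw
    have hd : cs.IsLeftDescent (cs.wordProd τ) a := by
      rw [IsLeftDescent, ← hτ, hω.eq, wordProd_cons, simple_mul_simple_cancel_left, hω'.eq]
      simp
    obtain ⟨j, -, hj⟩ := hd.exists_simple_mul_wordProd_eq
    rw [← hτ, wordProd_cons, simple_mul_simple_cancel_left] at hj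
    have hmem : cs.wordProd ω ∈ cs.parabolic J :=
      hj ▸ cs.wordProd_mem_parabolic fun k hk ↦ hτJ k (mem_of_mem_eraseIdx hk)
    rw [wordProd_cons, Subgroup.mul_mem_cancel_right _ hmem, simple_mem_parabolic_iff] at hw
    simpa [hw] using ih hω' hmem

theorem support_subset_of_mem_parabolic (cs : CoxeterSystem M W) {J : Set B} {w : W}
    (hw : w ∈ cs.parabolic J) : cs.support w ⊆ J :=
  fun _ hi ↦ hi J hw

theorem IsReduced.support_wordProd {cs : CoxeterSystem M W} {ω : List B} (hω : cs.IsReduced ω) :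
    cs.support (cs.wordProd ω) = {i | i ∈ ω} :=
  (cs.support_subset_of_mem_parabolic (cs.wordProd_mem_parabolic fun _ ↦ id)).antisymm
    fun i hi _ hJ ↦ hω.mem_of_wordProd_mem_parabolic hJ i hi

theorem mem_parabolic_support (cs : CoxeterSystem M W) (w : W) :
    w ∈ cs.parabolic (cs.support w) := by
  obtain ⟨ω, hω, rfl⟩ := cs.exists_isReduced w
  rw [hω.support_wordProd]
  exact cs.wordProd_mem_parabolic fun _ ↦ id

theorem length_mul_eq_add_of_isMinimalRep {cs : CoxeterSystem M W} {J : Set B} {v u : W}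
    (hv : cs.IsMinimalRep J v) (hu : u ∈ cs.parabolic J) :
    cs.length (v * u) = cs.length v + cs.length u := by
  obtain ⟨ω, hω, rfl, hJ⟩ := cs.exists_isReduced_of_mem_parabolic hu
  clear hu
  induction ω using List.reverseRecOn with
  | nil => simp
  | append_singleton ω a ih =>
    have hω' : cs.IsReduced ω := by simpa using hω.take ω.length
    have hJω : ∀ i ∈ ω, i ∈ J := fun i hi ↦ hJ i (by simp [hi])
    specialize ih hω' hJω
    have hlen : cs.length (cs.wordProd (ω ++ [a])) = ω.length + 1 := by simpa using hω.eq
    have hprod : cs.wordProd (ω ++ [a]) = cs.wordProd ω * cs.simple a := by simp [wordProd_append]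
    rw [hlen]
    rw [hprod] at hlen ⊢
    rw [← mul_assoc]
    rw [hω'.eq] at ih
    by_cases hd : cs.IsRightDescent (v * cs.wordProd ω) a
    · exfalso
      obtain ⟨τ, hτ, rfl⟩ := cs.exists_isReduced v
      rw [← wordProd_append] at hd
      obtain ⟨j, hj, hja⟩ := hd.exists_wordProd_mul_eq
      rw [wordProd_append] at hja
      obtain hlt | hge := lt_or_ge j τ.length
      · rw [eraseIdx_append_of_lt_length hlt, wordProd_append, ← mul_inv_eq_iff_eq_mul,
          mul_assoc, mul_assoc] at hja
        have hmem : cs.wordProd ω * (cs.simple a * (cs.wordProd ω)⁻¹) ∈ cs.parabolic J :=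
          mul_mem (cs.wordProd_mem_parabolic hJω) (mul_mem (cs.simple_mem_parabolic
            (hJ a (by simp))) (inv_mem (cs.wordProd_mem_parabolic hJω)))
        have h1 := hv _ hmem
        rw [hja, hτ.eq] at h1
        have h2 := cs.length_wordProd_le (τ.eraseIdx j)
        rw [length_eraseIdx_of_lt hlt] at h2
        omega
      · rw [eraseIdx_append_of_length_le hge, wordProd_append, mul_assoc, mul_right_inj] at hja
        have h2 := cs.length_wordProd_le (ω.eraseIdx (j - τ.length))
        rw [length_append] at hj
        rw [length_eraseIdx_of_lt (by omega), ← hja, hlen] at h2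
        omega
    · rw [cs.not_isRightDescent_iff.1 hd, ih, add_assoc]

theorem not_isLeftDescent_of_mem_parabolic {cs : CoxeterSystem M W} {J : Set B} {w : W}
    (hw : w ∈ cs.parabolic J) {i : B} (hi : i ∉ J) : ¬ cs.IsLeftDescent w i := by
  intro h
  obtain ⟨ω, -, rfl, hJ⟩ := cs.exists_isReduced_of_mem_parabolic hw
  obtain ⟨j, -, hj⟩ := h.exists_simple_mul_wordProd_eq
  have hmem : cs.wordProd (ω.eraseIdx j) ∈ cs.parabolic J :=
    cs.wordProd_mem_parabolic fun k hk ↦ hJ k (mem_of_mem_eraseIdx hk)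
  rw [← hj, Subgroup.mul_mem_cancel_right _ hw, simple_mem_parabolic_iff] at hmem
  exact hi hmem

theorem commute_simple_of_eq_two (cs : CoxeterSystem M W) {i j : B} (h : M i j = 2) :
    Commute (cs.simple i) (cs.simple j) := by
  have := cs.simple_mul_simple_pow i j
  rw [h, pow_two, mul_eq_one_iff_eq_inv, mul_inv_rev, inv_simple, inv_simple] at this
  exact this

/-- If `s` commutes with an element whose support does not contain `s`, then it is not adjacent
to any element of the support. -/
theorem IsReduced.eq_two_of_commute {cs : CoxeterSystem M W} {s : B} {ω : List B}
    (hω : cs.IsReduced ω) (hs : s ∉ ω) (hc : Commute (cs.simple s) (cs.wordProd ω)) :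
    ∀ t ∈ ω, M s t = 2 := by
  induction ω with
  | nil => simp
  | cons t ω ih =>
    have hω' : cs.IsReduced ω := hω.drop 1
    set J : Set B := {i | i ∈ t :: ω} with hJ
    have hv : cs.wordProd (t :: ω) ∈ cs.parabolic J := cs.wordProd_mem_parabolic fun _ ↦ id
    have hlen := cs.not_isLeftDescent_iff.1 (not_isLeftDescent_of_mem_parabolic hv hs)
    have hd : cs.IsLeftDescent (cs.wordProd (s :: t :: ω)) t := by
      rw [IsLeftDescent, wordProd_cons, hlen, hω.eq, hc.eq, wordProd_cons, mul_assoc,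
        simple_mul_simple_cancel_left]
      have h1 := cs.length_mul_le (cs.wordProd ω) (cs.simple s)
      rw [hω'.eq, length_simple] at h1
      rw [length_cons]
      omega
    have hst : M s t = 2 := by
      refine cs.eq_two_of_simple_mul_simple_mul_simple_mem_parabolic (J := J) hs (by simp [hJ]) ?_
      obtain ⟨j, -, hj⟩ := hd.exists_simple_mul_wordProd_eq
      cases j with
      | zero =>
        rw [eraseIdx_zero, tail_cons, wordProd_cons, ← mul_assoc, mul_eq_right] at hj
        have : cs.simple s = cs.simple t := by
          rw [mul_eq_one_iff_eq_inv, inv_simple] at hj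
          exact hj.symm
        have := cs.simple_mem_parabolic_iff.1 (this ▸ cs.simple_mem_parabolic (J := {t}) rfl)
        exact absurd (this ▸ mem_cons_self) hs
      | succ j =>
        rw [eraseIdx_cons_succ, wordProd_cons, wordProd_cons _ s] at hj
        rw [← Subgroup.mul_mem_cancel_right _ hv, mul_assoc, mul_assoc, hj,
          simple_mul_simple_cancel_left]
        exact cs.wordProd_mem_parabolic fun k hk ↦ mem_of_mem_eraseIdx hk
    have hc' : Commute (cs.simple s) (cs.wordProd ω) := by
      have := (cs.commute_simple_of_eq_two hst).mul_right hc
      rwa [wordProd_cons, simple_mul_simple_cancel_left] at this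
    simpa [hst] using ih hω' (fun h ↦ hs (mem_cons_of_mem _ h)) hc'

theorem eq_two_of_commute_of_notMem_support {cs : CoxeterSystem M W} {s : B} {v : W}
    (hs : s ∉ cs.support v) (hc : Commute (cs.simple s) v) : ∀ t ∈ cs.support v, M s t = 2 := by
  obtain ⟨ω, hω, rfl⟩ := cs.exists_isReduced v
  rw [hω.support_wordProd] at hs ⊢
  exact hω.eq_two_of_commute hs hc

theorem commute_of_forall_mem_support_eq_two (cs : CoxeterSystem M W) {s : B} {v : W}
    (h : ∀ t ∈ cs.support v, M s t = 2) : Commute (cs.simple s) v := by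
  have hle : cs.parabolic (cs.support v) ≤ Subgroup.centralizer {cs.simple s} := by
    rw [parabolic, Subgroup.closure_le]
    rintro _ ⟨t, ht, rfl⟩
    exact Subgroup.mem_centralizer_singleton_iff.2 (cs.commute_simple_of_eq_two (h t ht)).eq.symm
  exact (Subgroup.mem_centralizer_singleton_iff.1 (hle (cs.mem_parabolic_support v))).symm

theorem commute_of_isLeftDescent_mul (cs : CoxeterSystem M W)
    {J : Set B} {v u : W} (hv : cs.IsMinimalRep J v) (hu : u ∈ cs.parabolic J)
    {s : B} (hs : s ∉ cs.support v) (hd : cs.IsLeftDescent (v * u) s) :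
    Commute (cs.simple s) v := by
  obtain ⟨x, hx, hsv⟩ : ∃ x ∈ cs.parabolic J, cs.simple s * v = v * x := by
    obtain ⟨τ, hτ, rfl⟩ := cs.exists_isReduced v
    obtain ⟨ω, hω, rfl, hJ⟩ := cs.exists_isReduced_of_mem_parabolic hu
    rw [← wordProd_append] at hd
    obtain ⟨j, -, hj⟩ := hd.exists_simple_mul_wordProd_eq
    rw [wordProd_append, ← mul_assoc] at hj
    obtain hlt | hge := lt_or_ge j τ.length
    · rw [eraseIdx_append_of_lt_length hlt, wordProd_append, mul_left_inj] at hj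
      have hmem : cs.simple s * cs.wordProd τ ∈ cs.parabolic (cs.support (cs.wordProd τ)) := by
        rw [hj, hτ.support_wordProd]
        exact cs.wordProd_mem_parabolic fun k hk ↦ mem_of_mem_eraseIdx hk
      rw [Subgroup.mul_mem_cancel_right _ (cs.mem_parabolic_support _),
        simple_mem_parabolic_iff] at hmem
      exact absurd hmem hs
    · rw [eraseIdx_append_of_length_le hge, wordProd_append, ← eq_mul_inv_iff_mul_eq,
        mul_assoc] at hj
      exact ⟨_, mul_mem (cs.wordProd_mem_parabolic fun k hk ↦ hJ k (mem_of_mem_eraseIdx hk))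
        (inv_mem hu), hj⟩
  have hlen := cs.not_isLeftDescent_iff.1
    (not_isLeftDescent_of_mem_parabolic (cs.mem_parabolic_support v) hs)
  rw [hsv, length_mul_eq_add_of_isMinimalRep hv hx, add_right_inj, length_eq_one_iff] at hlen
  obtain ⟨t, rfl⟩ := hlen
  have hst : s = t := by
    have hvt : v ∈ cs.parabolic (insert t (cs.support v)) :=
      Subgroup.closure_mono (Set.image_mono (Set.subset_insert _ _)) (cs.mem_parabolic_support v)
    have hmem : cs.simple s * v ∈ cs.parabolic (insert t (cs.support v)) :=
      hsv ▸ mul_mem hvt (cs.simple_mem_parabolic (Set.mem_insert _ _))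
    rw [Subgroup.mul_mem_cancel_right _ hvt, simple_mem_parabolic_iff] at hmem
    exact hmem.resolve_right hs
  rwa [← hst] at hsv

end Parabolic

end CoxeterSystem

/-- if `w = vu` is a parabolic decomposition and `s ∈ D_L(u)` with
`s ∉ S(v)`, then `s ∈ D_L(w)` iff `s` is not adjacent to any element of `S(v)`
(i.e. `m_{st} = 2` for all `t ∈ S(v)`). -/
theorem left_descent_of_parabolic_decomposition (cs : CoxeterSystem M W)
    (J : Set B) (v u : W) (hv : cs.IsMinimalRep J v) (hu : u ∈ cs.parabolic J)
    (s : B) (hsd : cs.IsLeftDescent u s) (hs : s ∉ cs.support v) :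
    cs.IsLeftDescent (v * u) s ↔ ∀ t ∈ cs.support v, M s t = 2 := by
  refine ⟨fun hd ↦ CoxeterSystem.eq_two_of_commute_of_notMem_support hs
    (cs.commute_of_isLeftDescent_mul hv hu hs hd), fun h ↦ ?_⟩
  rw [CoxeterSystem.IsLeftDescent, ← mul_assoc, (cs.commute_of_forall_mem_support_eq_two h).eq,
    mul_assoc, CoxeterSystem.length_mul_eq_add_of_isMinimalRep hv hu]
  exact (cs.length_mul_le _ _).trans_lt (Nat.add_lt_add_left hsd _)
end
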